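/- Let Ω ⊆ ℝⁿ be an open convex set and let g : Ω → Matₙ(ℝ) be a smooth map such that g(x) is a symmetric matrix for every x ∈ Ω and the Codazzi condition ∂g_{jk}/∂xⁱ = ∂g_{ik}/∂x^j holds on Ω for all indices i, j, k. Then there exists a smooth function φ : Ω → ℝ such that ∂²φ/∂xⁱ∂x^j = g_{ij} on Ω, i.e., g is the Hessian of a global potential φ on Ω. -/

import Mathlib

open Real Matrix Filter

/-- The `i`-th partial derivative of `f : ℝⁿ → ℝ`. -/
noncomputable def pd {n : ℕ} (i : Fin n) (f : (Fin n → ℝ) → ℝ) (x : Fin n → ℝ) : ℝ :=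
  fderiv ℝ f x (Pi.single i 1)

/- Regard `g` as a 1-form with values in covectors. The Codazzi condition says that this form is
closed, so by the Poincaré lemma for vector-valued forms `g` is the derivative of a covector field
`ψ`. Symmetry of `g` says in turn that the 1-form `ψ` is closed, so `ψ` is the derivative of a
function `φ`, whose second derivative is `g`. -/

theorem exists_hasFDerivAt_hasFDerivAt_of_codazzi {E F : Type*} [NormedAddCommGroup E]
    [NormedSpace ℝ E] [NormedAddCommGroup F] [NormedSpace ℝ F] [CompleteSpace F] {s : Set E}
    (hs : IsOpen s) (hconv : Convex ℝ s) {g : E → E →L[ℝ] E →L[ℝ] F} (hg : DifferentiableOn ℝ g s)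
    (hsymm : ∀ x ∈ s, ∀ u v, g x u v = g x v u)
    (hcodazzi : ∀ x ∈ s, ∀ u v, fderiv ℝ g x u v = fderiv ℝ g x v u) :
    ∃ (φ : E → F) (ψ : E → E →L[ℝ] F),
      (∀ x ∈ s, HasFDerivAt φ (ψ x) x) ∧ ∀ x ∈ s, HasFDerivAt ψ (g x) x := by
  obtain ⟨ψ, hψ⟩ := hconv.exists_forall_hasFDerivAt_of_fderiv_symmetric hs hg hcodazzi
  have hψ_closed : ∀ x ∈ s, ∀ u v, fderiv ℝ ψ x u v = fderiv ℝ ψ x v u := fun x hx => by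
    simpa only [(hψ x hx).fderiv] using hsymm x hx
  obtain ⟨φ, hφ⟩ := hconv.exists_forall_hasFDerivAt_of_fderiv_symmetric hs
    (fun x hx => (hψ x hx).differentiableAt.differentiableWithinAt) hψ_closed
  exact ⟨φ, ψ, hφ, hψ⟩

section Calculus

variable {𝕜 E F G : Type*} [NontriviallyNormedField 𝕜] [NormedAddCommGroup E] [NormedSpace 𝕜 E]
  [NormedAddCommGroup F] [NormedSpace 𝕜 F] [NormedAddCommGroup G] [NormedSpace 𝕜 G] {s : Set E}

theorem contDiffOn_succ_of_hasFDerivAt (hs : IsOpen s) {m : ℕ∞} {f : E → F} {f' : E → E →L[𝕜] F}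
    (hf : ∀ x ∈ s, HasFDerivAt f (f' x) x) (hf' : ContDiffOn 𝕜 m f' s) :
    ContDiffOn 𝕜 (m + 1) f s :=
  (contDiffOn_succ_iff_fderiv_of_isOpen hs).2
    ⟨fun x hx => (hf x hx).differentiableAt.differentiableWithinAt, by simp,
      hf'.congr fun x hx => (hf x hx).fderiv⟩

theorem contDiffOn_add_two_of_hasFDerivAt (hs : IsOpen s) {m : ℕ∞} {φ : E → F}
    {ψ : E → E →L[𝕜] F} {g : E → E →L[𝕜] E →L[𝕜] F} (hφ : ∀ x ∈ s, HasFDerivAt φ (ψ x) x)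
    (hψ : ∀ x ∈ s, HasFDerivAt ψ (g x) x) (hg : ContDiffOn 𝕜 m g s) :
    ContDiffOn 𝕜 (m + 2) φ s := by
  have hψ_contDiffOn : ContDiffOn 𝕜 ↑(m + 1) ψ s :=
    mod_cast contDiffOn_succ_of_hasFDerivAt hs hψ hg
  simpa [add_assoc, one_add_one_eq_two] using contDiffOn_succ_of_hasFDerivAt hs hφ hψ_contDiffOn

theorem hasFDerivAt_clm_apply_const {L : E → F →L[𝕜] G} {L' : E →L[𝕜] F →L[𝕜] G} {x : E}
    (hL : HasFDerivAt L L' x) (v : F) : HasFDerivAt (fun y => L y v) (L'.flip v) x := by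
  simpa using hL.clm_apply (hasFDerivAt_const v x)

theorem fderiv_apply_apply {H : Type*} [NormedAddCommGroup H] [NormedSpace 𝕜 H]
    {B : E → F →L[𝕜] G →L[𝕜] H} {x : E} (hB : DifferentiableAt 𝕜 B x) (u : E) (v : F) (w : G) :
    fderiv 𝕜 B x u v w = fderiv 𝕜 (fun y => B y v w) x u := by
  rw [(hasFDerivAt_clm_apply_const (hasFDerivAt_clm_apply_const hB.hasFDerivAt v) w).fderiv]
  rfl

end Calculus

section Tensor

variable {𝕜 E ι : Type*} [NontriviallyNormedField 𝕜] [NormedAddCommGroup E] [NormedSpace 𝕜 E]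

theorem clm_apply_apply_comm_of_basis {F : Type*} [NormedAddCommGroup F] [NormedSpace 𝕜 F]
    (b : Module.Basis ι 𝕜 E) {B : E →L[𝕜] E →L[𝕜] F}
    (hB : ∀ i j, B (b i) (b j) = B (b j) (b i)) (u v : E) : B u v = B v u := by
  have hflip : B.toLinearMap₁₂ = B.flip.toLinearMap₁₂ :=
    LinearMap.ext_basis b b (by simpa using hB)
  exact LinearMap.congr_fun₂ hflip u v

variable [Fintype ι]

/-- The bilinear form `∑ᵢⱼ Aᵢⱼ θⁱ ⊗ θʲ` with coefficient matrix `A` in the coframe `θ`. It turns a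
matrix field into a field of continuous bilinear maps, to which the Fréchet derivative applies
without choosing a norm on matrices. -/
noncomputable def coframeTensor (θ : ι → E →L[𝕜] 𝕜) (A : Matrix ι ι 𝕜) : E →L[𝕜] E →L[𝕜] 𝕜 :=
  ∑ i, ∑ j, A i j • (θ i).smulRight (θ j)

theorem coframeTensor_comm (θ : ι → E →L[𝕜] 𝕜) {A : Matrix ι ι 𝕜} (hA : A.IsSymm) (u v : E) :
    coframeTensor θ A u v = coframeTensor θ A v u := by
  simp only [coframeTensor, _root_.sum_apply, _root_.smul_apply,
    ContinuousLinearMap.smulRight_apply, smul_eq_mul]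
  rw [Finset.sum_comm]
  refine Finset.sum_congr rfl fun i _ => Finset.sum_congr rfl fun j _ => ?_
  rw [hA.apply]
  ring

theorem coframeTensor_proj_single_single [DecidableEq ι] (A : Matrix ι ι 𝕜) (i j : ι) :
    coframeTensor (fun k => ContinuousLinearMap.proj k) A (Pi.single i 1) (Pi.single j 1) =
      A i j := by
  simp [coframeTensor, Pi.single_apply]

variable {D : Type*} [NormedAddCommGroup D] [NormedSpace 𝕜 D] {s : Set D} {g : D → Matrix ι ι 𝕜}

set_option maxSynthPendingDepth 3 in
theorem contDiffOn_coframeTensor {m : WithTop ℕ∞} (θ : ι → E →L[𝕜] 𝕜)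
    (hg : ∀ i j, ContDiffOn 𝕜 m (fun x => g x i j) s) :
    ContDiffOn 𝕜 m (fun x => coframeTensor θ (g x)) s :=
  ContDiffOn.sum fun i _ => ContDiffOn.sum fun j _ => (hg i j).smul contDiffOn_const

set_option maxSynthPendingDepth 3 in
theorem differentiableOn_coframeTensor (θ : ι → E →L[𝕜] 𝕜)
    (hg : ∀ i j, DifferentiableOn 𝕜 (fun x => g x i j) s) :
    DifferentiableOn 𝕜 (fun x => coframeTensor θ (g x)) s :=
  DifferentiableOn.fun_sum fun i _ => DifferentiableOn.fun_sum fun j _ => (hg i j).smul_const _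

end Tensor

section PartialDerivatives

variable {n : ℕ} {x : Fin n → ℝ}

theorem fderiv_comm_of_pd_comm {B : (Fin n → ℝ) → (Fin n → ℝ) →L[ℝ] (Fin n → ℝ) →L[ℝ] ℝ}
    (hB : DifferentiableAt ℝ B x)
    (hpd : ∀ i j k, pd i (fun y => B y (Pi.single j 1) (Pi.single k 1)) x =
      pd j (fun y => B y (Pi.single i 1) (Pi.single k 1)) x)
    (u v : Fin n → ℝ) : fderiv ℝ B x u v = fderiv ℝ B x v u := by
  refine clm_apply_apply_comm_of_basis (Pi.basisFun ℝ (Fin n)) (fun i j => ?_) u v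
  refine ContinuousLinearMap.coe_injective ((Pi.basisFun ℝ (Fin n)).ext fun k => ?_)
  simpa only [Pi.basisFun_apply, ContinuousLinearMap.coe_coe, fderiv_apply_apply hB, pd]
    using hpd i j k

theorem pd_pd_eq_of_hasFDerivAt {φ : (Fin n → ℝ) → ℝ}
    {ψ : (Fin n → ℝ) → (Fin n → ℝ) →L[ℝ] ℝ} {B : (Fin n → ℝ) →L[ℝ] (Fin n → ℝ) →L[ℝ] ℝ}
    (hφ : ∀ᶠ y in nhds x, HasFDerivAt φ (ψ y) y) (hψ : HasFDerivAt ψ B x) (i j : Fin n) :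
    pd i (fun y => pd j φ y) x = B (Pi.single i 1) (Pi.single j 1) := by
  have hpd : (fun y => pd j φ y) =ᶠ[nhds x] fun y => ψ y (Pi.single j 1) :=
    hφ.mono fun y hy => by simp only [pd, hy.fderiv]
  rw [pd, hpd.fderiv_eq, (hasFDerivAt_clm_apply_const hψ _).fderiv, ContinuousLinearMap.flip_apply]

end PartialDerivatives

theorem stmt9_general {n : ℕ} {Ω : Set (Fin n → ℝ)} (hΩ : IsOpen Ω) (hconv : Convex ℝ Ω)
    {g : (Fin n → ℝ) → Matrix (Fin n) (Fin n) ℝ}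
    (hg : ∀ i j, DifferentiableOn ℝ (fun x => g x i j) Ω)
    (hsymm : ∀ x ∈ Ω, (g x).IsSymm)
    (hcodazzi : ∀ x ∈ Ω, ∀ i j k,
      pd i (fun y => g y j k) x = pd j (fun y => g y i k) x) :
    ∃ φ : (Fin n → ℝ) → ℝ,
      (∀ m : ℕ∞, (∀ i j, ContDiffOn ℝ m (fun x => g x i j) Ω) → ContDiffOn ℝ (m + 2) φ Ω) ∧
      ∀ x ∈ Ω, ∀ i j, pd i (fun y => pd j φ y) x = g x i j := by
  let G : (Fin n → ℝ) → (Fin n → ℝ) →L[ℝ] (Fin n → ℝ) →L[ℝ] ℝ :=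
    fun x => coframeTensor (fun k => ContinuousLinearMap.proj k) (g x)
  have hG_single : ∀ x i j, G x (Pi.single i 1) (Pi.single j 1) = g x i j :=
    fun x => coframeTensor_proj_single_single (g x)
  have hG : DifferentiableOn ℝ G Ω := differentiableOn_coframeTensor _ hg
  have hG_closed : ∀ x ∈ Ω, ∀ u v, fderiv ℝ G x u v = fderiv ℝ G x v u := fun x hx =>
    fderiv_comm_of_pd_comm (hG.differentiableAt (hΩ.mem_nhds hx))
      (by simpa only [hG_single] using hcodazzi x hx)
  obtain ⟨φ, ψ, hφ, hψ⟩ := exists_hasFDerivAt_hasFDerivAt_of_codazzi hΩ hconv hG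
    (fun x hx => coframeTensor_comm _ (hsymm x hx)) hG_closed
  refine ⟨φ, fun m hm => contDiffOn_add_two_of_hasFDerivAt hΩ hφ hψ (contDiffOn_coframeTensor _ hm),
    fun x hx i j => ?_⟩
  rw [pd_pd_eq_of_hasFDerivAt (eventually_of_mem (hΩ.mem_nhds hx) hφ) (hψ x hx), hG_single]

theorem stmt9 {n : ℕ} (Ω : Set (Fin n → ℝ)) (hΩ : IsOpen Ω) (hconv : Convex ℝ Ω)
    (g : (Fin n → ℝ) → Matrix (Fin n) (Fin n) ℝ)
    (hg : ∀ i j, ContDiffOn ℝ (⊤ : ℕ∞) (fun x => g x i j) Ω)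
    (hsymm : ∀ x ∈ Ω, (g x).IsSymm)
    (hcodazzi : ∀ x ∈ Ω, ∀ i j k,
      pd i (fun y => g y j k) x = pd j (fun y => g y i k) x) :
    ∃ φ : (Fin n → ℝ) → ℝ, ContDiffOn ℝ (⊤ : ℕ∞) φ Ω ∧
      ∀ x ∈ Ω, ∀ i j, pd i (fun y => pd j φ y) x = g x i j := by
  obtain ⟨φ, hφ, hφg⟩ := stmt9_general hΩ hconv
    (fun i j => (hg i j).differentiableOn (by simp)) hsymm hcodazzi
  exact ⟨φ, hφ ⊤ hg, hφg⟩
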